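/- arXiv:1903.01940 — 9 statements merged into one kernel-verified Lean document; each statement's English description precedes it below -/
import Mathlib

section
/- Let w = (w₁,w₂,w₃,w₄) and w' = (w₁',w₂',w₃',w₄') be unit vectors in ℝ⁴. There exist 2×2 real orthogonal matrices U and V such that the Kronecker product U ⊗ V maps w to w' if and only if |w₁w₄ − w₂w₃| = |w₁'w₄' − w₂'w₃'|. (This classifies the orbits of two-qubit states with real amplitudes under real local gates: two states are connected by real local gates exactly when the absolute determinants of their amplitude matrices agree.) -/
/-!
Writing `W` for the amplitude matrix of `w`, the gate `U ⊗ V` acts by `W ↦ U W Vᵀ`, so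
`det W' = det U * det V * det W`, and orthogonal matrices have determinant `±1`.

Conversely, split `W` into its rotation part `z₁ = (w₁ + w₄) + i (w₃ - w₂)` and its reflection part
`z₂ = (w₁ - w₄) + i (w₃ + w₂)`. For a unit vector `|z₁|² = 1 + 2 det W` and `|z₂|² = 1 - 2 det W`,
and the rotations `U = R(a)`, `V = R(b)` multiply `z₁` by `e^{i(a-b)}` and `z₂` by `e^{i(a+b)}`.
If the determinants agree, both phases can therefore be matched independently
(`exists_angles`). If the determinants are opposite, the same applies after multiplying `W'` on the
left by `diag(1, -1)`.
-/

open Matrix Real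

/-- Kronecker product of two `2 × 2` real matrices, as a `4 × 4` real matrix
acting on amplitude vectors `(w₁,w₂,w₃,w₄)` of two-qubit states. -/
noncomputable def kron (A B : Matrix (Fin 2) (Fin 2) ℝ) : Matrix (Fin 4) (Fin 4) ℝ :=
  Matrix.of fun i j =>
    A ⟨i.val / 2, by omega⟩ ⟨j.val / 2, by omega⟩ *
    B ⟨i.val % 2, by omega⟩ ⟨j.val % 2, by omega⟩

/-- Two plane vectors of equal length differ by a rotation. -/
lemma exists_rotation (x y x' y' : ℝ) (h : x ^ 2 + y ^ 2 = x' ^ 2 + y' ^ 2) :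
    ∃ θ : ℝ, x' = cos θ * x - sin θ * y ∧ y' = sin θ * x + cos θ * y := by
  by_cases hz : x ^ 2 + y ^ 2 = 0
  · have hx : x = 0 := by nlinarith [sq_nonneg x, sq_nonneg y]
    have hy : y = 0 := by nlinarith [sq_nonneg x, sq_nonneg y]
    have hx' : x' = 0 := by nlinarith [sq_nonneg x', sq_nonneg y']
    have hy' : y' = 0 := by nlinarith [sq_nonneg x', sq_nonneg y']
    exact ⟨0, by simp [*], by simp [*]⟩
  · -- The vector `(c, s)` is the quotient `(x' + i y') / (x + i y)`.
    obtain ⟨c, hc⟩ : ∃ c, c = (x * x' + y * y') / (x ^ 2 + y ^ 2) := ⟨_, rfl⟩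
    obtain ⟨s, hs⟩ : ∃ s, s = (x * y' - y * x') / (x ^ 2 + y ^ 2) := ⟨_, rfl⟩
    have hcs : c ^ 2 + s ^ 2 = 1 := by
      rw [hc, hs]
      field_simp
      linear_combination (-(x ^ 2 + y ^ 2)) * h
    have hn : ‖(⟨c, s⟩ : ℂ)‖ = 1 := by
      rw [← sq_eq_sq₀ (norm_nonneg _) zero_le_one, Complex.sq_norm, Complex.normSq_mk]
      linarith
    obtain ⟨θ, hθ⟩ := (Complex.norm_eq_one_iff _).1 hn
    have hcos : cos θ = c := by
      rw [← Complex.exp_ofReal_mul_I_re, hθ]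
    have hsin : sin θ = s := by
      rw [← Complex.exp_ofReal_mul_I_im, hθ]
    refine ⟨θ, ?_, ?_⟩
    · rw [hcos, hsin, hc, hs]
      field_simp
      ring
    · rw [hcos, hsin, hc, hs]
      field_simp
      ring

/-- Amplitude matrices of equal norm and equal determinant are related by
`W' = R(a) W R(b)ᵀ`, written out entrywise. -/
lemma exists_angles (p q r t p' q' r' t' : ℝ)
    (h : p ^ 2 + q ^ 2 + r ^ 2 + t ^ 2 = 1) (h' : p' ^ 2 + q' ^ 2 + r' ^ 2 + t' ^ 2 = 1)
    (hd : p * t - q * r = p' * t' - q' * r') :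
    ∃ a b : ℝ,
      p' = cos a * cos b * p - cos a * sin b * q - sin a * cos b * r + sin a * sin b * t ∧
      q' = cos a * sin b * p + cos a * cos b * q - sin a * sin b * r - sin a * cos b * t ∧
      r' = sin a * cos b * p - sin a * sin b * q + cos a * cos b * r - cos a * sin b * t ∧
      t' = sin a * sin b * p + sin a * cos b * q + cos a * sin b * r + cos a * cos b * t := by
  obtain ⟨α, h1, h2⟩ := exists_rotation (p + t) (r - q) (p' + t') (r' - q')
    (by linear_combination h - h' + 2 * hd)
  obtain ⟨β, h3, h4⟩ := exists_rotation (p - t) (r + q) (p' - t') (r' + q')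
    (by linear_combination h - h' - 2 * hd)
  obtain ⟨a, b, rfl, rfl⟩ : ∃ a b : ℝ, α = a - b ∧ β = a + b :=
    ⟨(α + β) / 2, (β - α) / 2, by ring, by ring⟩
  rw [cos_sub, sin_sub] at h1 h2
  rw [cos_add, sin_add] at h3 h4
  refine ⟨a, b, ?_, ?_, ?_, ?_⟩
  · linear_combination (h1 + h3) / 2
  · linear_combination (h4 - h2) / 2
  · linear_combination (h2 + h4) / 2
  · linear_combination (h1 - h3) / 2

lemma kron_mulVec (U V : Matrix (Fin 2) (Fin 2) ℝ) (w : Fin 4 → ℝ) :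
    (kron U V).mulVec w =
      ![U 0 0 * V 0 0 * w 0 + U 0 0 * V 0 1 * w 1 + U 0 1 * V 0 0 * w 2 + U 0 1 * V 0 1 * w 3,
        U 0 0 * V 1 0 * w 0 + U 0 0 * V 1 1 * w 1 + U 0 1 * V 1 0 * w 2 + U 0 1 * V 1 1 * w 3,
        U 1 0 * V 0 0 * w 0 + U 1 0 * V 0 1 * w 1 + U 1 1 * V 0 0 * w 2 + U 1 1 * V 0 1 * w 3,
        U 1 0 * V 1 0 * w 0 + U 1 0 * V 1 1 * w 1 + U 1 1 * V 1 0 * w 2 + U 1 1 * V 1 1 * w 3] := by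
  ext i
  fin_cases i <;> simp [kron, Matrix.mulVec, dotProduct, Fin.sum_univ_four]

lemma abs_det_of_orthogonal (U : Matrix (Fin 2) (Fin 2) ℝ) (h : Uᵀ * U = 1) :
    |U 0 0 * U 1 1 - U 0 1 * U 1 0| = 1 := by
  have h1 := congrArg Matrix.det h
  rw [Matrix.det_mul, Matrix.det_transpose, Matrix.det_one, Matrix.det_fin_two] at h1
  rw [← sq_eq_sq₀ (abs_nonneg _) zero_le_one, sq_abs]
  linarith

theorem stmt_0 (w w' : Fin 4 → ℝ)
    (hw : w 0 ^ 2 + w 1 ^ 2 + w 2 ^ 2 + w 3 ^ 2 = 1)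
    (hw' : w' 0 ^ 2 + w' 1 ^ 2 + w' 2 ^ 2 + w' 3 ^ 2 = 1) :
    (∃ U V : Matrix (Fin 2) (Fin 2) ℝ, Uᵀ * U = 1 ∧ Vᵀ * V = 1 ∧
        (kron U V).mulVec w = w') ↔
      |w 0 * w 3 - w 1 * w 2| = |w' 0 * w' 3 - w' 1 * w' 2| := by
  have rot_orth (b : ℝ) :
      (!![cos b, -sin b; sin b, cos b] : Matrix (Fin 2) (Fin 2) ℝ)ᵀ *
        !![cos b, -sin b; sin b, cos b] = 1 := by
    have := sin_sq_add_cos_sq b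
    ext i j
    fin_cases i <;> fin_cases j <;> simp [Matrix.mul_apply, Fin.sum_univ_two] <;> linarith
  have refl_orth (a : ℝ) :
      (!![cos a, -sin a; -sin a, -cos a] : Matrix (Fin 2) (Fin 2) ℝ)ᵀ *
        !![cos a, -sin a; -sin a, -cos a] = 1 := by
    have := sin_sq_add_cos_sq a
    ext i j
    fin_cases i <;> fin_cases j <;> simp [Matrix.mul_apply, Fin.sum_univ_two] <;> linarith
  constructor
  · rintro ⟨U, V, hU, hV, rfl⟩
    have key : ((kron U V).mulVec w) 0 * ((kron U V).mulVec w) 3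
        - ((kron U V).mulVec w) 1 * ((kron U V).mulVec w) 2 =
        (U 0 0 * U 1 1 - U 0 1 * U 1 0) * (V 0 0 * V 1 1 - V 0 1 * V 1 0)
          * (w 0 * w 3 - w 1 * w 2) := by
      rw [kron_mulVec]
      simp
      ring
    rw [key, abs_mul, abs_mul, abs_det_of_orthogonal U hU, abs_det_of_orthogonal V hV]
    ring
  · intro h
    rcases abs_eq_abs.1 h with hd | hd
    · obtain ⟨a, b, h0, h1, h2, h3⟩ := exists_angles _ _ _ _ _ _ _ _ hw hw' hd
      refine ⟨_, _, rot_orth a, rot_orth b, ?_⟩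
      rw [kron_mulVec]
      ext i
      fin_cases i <;> simp <;> linarith
    · -- Negating the second row of `W'` flips the sign of its determinant.
      obtain ⟨a, b, h0, h1, h2, h3⟩ := exists_angles (w 0) (w 1) (w 2) (w 3)
        (w' 0) (w' 1) (-w' 2) (-w' 3) hw (by linarith) (by linarith)
      refine ⟨_, _, refl_orth a, rot_orth b, ?_⟩
      rw [kron_mulVec]
      ext i
      fin_cases i <;> simp <;> linarith
end

section
/- For all real numbers s, t and every vector w = (w₁,w₂,w₃,w₄) ∈ ℝ⁴, the vector w' = (w₁',w₂',w₃',w₄') = (R_y(s) ⊗ R_y(t)) w satisfies (w₁' − w₄')² + (w₂' + w₃')² = (w₁ − w₄)² + (w₂ + w₃)². (The quantity x₁² + x₂² in Bell coordinates is invariant under local rotation gates, so each torus Σ_d(v₃,v₄) is preserved by R_y ⊗ R_y.) -/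
/-! On the Bell coordinates `(w₁ - w₄, w₂ + w₃)` the gate `R_y(s) ⊗ R_y(t)` acts as the plane
rotation by the angle `(s + t) / 2`, so the sum of their squares is preserved. -/

open Matrix Real

/-- The single-qubit rotation gate `R_y(θ)`. -/
noncomputable def Ry (θ : ℝ) : Matrix (Fin 2) (Fin 2) ℝ :=
  !![Real.cos (θ / 2), -Real.sin (θ / 2); Real.sin (θ / 2), Real.cos (θ / 2)]

theorem stmt_2 (s t : ℝ) (w : Fin 4 → ℝ) (w' : Fin 4 → ℝ)
    (hw' : w' = (kron (Ry s) (Ry t)).mulVec w) :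
    (w' 0 - w' 3) ^ 2 + (w' 1 + w' 2) ^ 2
      = (w 0 - w 3) ^ 2 + (w 1 + w 2) ^ 2 := by
  have h₁ : w' 0 - w' 3
      = cos (s / 2 + t / 2) * (w 0 - w 3) - sin (s / 2 + t / 2) * (w 1 + w 2) := by
    rw [cos_add, sin_add]
    simp [hw', Matrix.mulVec, dotProduct, Fin.sum_univ_four, kron, Ry]
    ring
  have h₂ : w' 1 + w' 2
      = sin (s / 2 + t / 2) * (w 0 - w 3) + cos (s / 2 + t / 2) * (w 1 + w 2) := by
    rw [cos_add, sin_add]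
    simp [hw', Matrix.mulVec, dotProduct, Fin.sum_univ_four, kron, Ry]
    ring
  rw [h₁, h₂]
  linear_combination
    ((w 0 - w 3) ^ 2 + (w 1 + w 2) ^ 2) * sin_sq_add_cos_sq (s / 2 + t / 2)
end

section
/- Let w = (w₁,w₂,w₃,w₄) be a unit vector in ℝ⁴. There exist 2×2 real orthogonal matrices U and V with (U ⊗ V) v₃ = w if and only if there exists θ ∈ ℝ such that w = cos θ · v₃ + sin θ · v₄ or w = cos θ · v₁ + sin θ · v₂. (The orbit of a Bell state under real local gates is exactly the union of the two circles E(v₃,v₄) and E(v₁,v₂).) -/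
/-!
Identify `(w₁,w₂,w₃,w₄)` with the `2 × 2` matrix having rows `(w₁,w₂)` and `(w₃,w₄)`.  Then
`(U ⊗ V) v₃` is the matrix `(1/√2) U Vᵀ`, so the orbit of `v₃` is `(1/√2) O(2)`
(every element of `O(2)` arises, with `V = 1`).  The group `O(2)` consists of two
circles, the rotations and the reflections (`orthogonal_two_cases`), and these are the circles
through `v₃, v₄` and through `v₁, v₂`.
-/

open Matrix Real

/-- Bell basis vector `v₁ = (|00⟩ - |11⟩)/√2`. -/
noncomputable def v1 : Fin 4 → ℝ := ![1 / Real.sqrt 2, 0, 0, -(1 / Real.sqrt 2)]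

/-- Bell basis vector `v₂ = (|01⟩ + |10⟩)/√2`. -/
noncomputable def v2 : Fin 4 → ℝ := ![0, 1 / Real.sqrt 2, 1 / Real.sqrt 2, 0]

/-- Bell basis vector `v₃ = (|00⟩ + |11⟩)/√2`. -/
noncomputable def v3 : Fin 4 → ℝ := ![1 / Real.sqrt 2, 0, 0, 1 / Real.sqrt 2]

/-- Bell basis vector `v₄ = (|01⟩ - |10⟩)/√2`. -/
noncomputable def v4 : Fin 4 → ℝ := ![0, 1 / Real.sqrt 2, -(1 / Real.sqrt 2), 0]

/-- `(U ⊗ V) v₃` lists the entries of `U Vᵀ` row by row, scaled by `1/√2`. -/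
lemma kron_mulVec_v3 (U V : Matrix (Fin 2) (Fin 2) ℝ) :
    (kron U V).mulVec v3 = (1 / Real.sqrt 2) •
      ![(U * Vᵀ) 0 0, (U * Vᵀ) 0 1, (U * Vᵀ) 1 0, (U * Vᵀ) 1 1] := by
  ext i
  fin_cases i <;>
    simp [kron, v3, Matrix.mulVec, dotProduct, Fin.sum_univ_four, Matrix.mul_apply] <;> ring

lemma exists_angle (a b : ℝ) (h : a ^ 2 + b ^ 2 = 1) :
    ∃ θ : ℝ, a = Real.cos θ ∧ b = Real.sin θ := by
  have hn : ‖(⟨a, b⟩ : ℂ)‖ = 1 := by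
    rw [Complex.norm_eq_sqrt_sq_add_sq, h, Real.sqrt_one]
  have hc := Complex.norm_mul_cos_arg (⟨a, b⟩ : ℂ)
  have hs := Complex.norm_mul_sin_arg (⟨a, b⟩ : ℂ)
  rw [hn, one_mul] at hc hs
  exact ⟨_, hc.symm, hs.symm⟩

/-- Elements of `O(2)` are rotations or reflections, according to the sign of the determinant. -/
lemma orthogonal_two_cases (M : Matrix (Fin 2) (Fin 2) ℝ) (h : M * Mᵀ = 1) :
    ∃ θ : ℝ, M 0 0 = Real.cos θ ∧ M 0 1 = Real.sin θ ∧
      ((M 1 0 = -Real.sin θ ∧ M 1 1 = Real.cos θ) ∨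
        (M 1 0 = Real.sin θ ∧ M 1 1 = -Real.cos θ)) := by
  have h00 := congrFun (congrFun h 0) 0
  have h01 := congrFun (congrFun h 0) 1
  have h11 := congrFun (congrFun h 1) 1
  simp [Matrix.mul_apply, Fin.sum_univ_two] at h00 h01 h11
  obtain ⟨θ, ha, hb⟩ := exists_angle (M 0 0) (M 0 1) (by linarith)
  refine ⟨θ, ha, hb, ?_⟩
  rw [← ha, ← hb]
  generalize M 0 0 = a at *
  generalize M 0 1 = b at *
  generalize M 1 0 = c at *
  generalize M 1 1 = d at *
  have hdet : (a * d - b * c - 1) * (a * d - b * c + 1) = 0 := by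
    -- Lagrange's identity: `(ad - bc)² = (a² + b²)(c² + d²) - (ac + bd)²`
    linear_combination (c * c + d * d) * h00 + h11 - (a * c + b * d) * h01
  rcases mul_eq_zero.mp hdet with hd | hd
  · left
    -- here `(a - d)² + (b + c)² = 2 - 2 det = 0`
    constructor
    · nlinarith [sq_nonneg (a - d), sq_nonneg (b + c)]
    · nlinarith [sq_nonneg (a - d), sq_nonneg (b + c)]
  · right
    constructor
    · nlinarith [sq_nonneg (a + d), sq_nonneg (b - c)]
    · nlinarith [sq_nonneg (a + d), sq_nonneg (b - c)]

theorem stmt_3 (w : Fin 4 → ℝ)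
    (hw : w 0 ^ 2 + w 1 ^ 2 + w 2 ^ 2 + w 3 ^ 2 = 1) :
    (∃ U V : Matrix (Fin 2) (Fin 2) ℝ, Uᵀ * U = 1 ∧ Vᵀ * V = 1 ∧
        (kron U V).mulVec v3 = w) ↔
      ∃ θ : ℝ, w = Real.cos θ • v3 + Real.sin θ • v4 ∨
               w = Real.cos θ • v1 + Real.sin θ • v2 := by
  constructor
  · rintro ⟨U, V, hU, hV, rfl⟩
    have hM : (U * Vᵀ) * (U * Vᵀ)ᵀ = 1 := by
      rw [Matrix.transpose_mul, Matrix.transpose_transpose, Matrix.mul_assoc,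
        ← Matrix.mul_assoc Vᵀ, hV, Matrix.one_mul]
      exact mul_eq_one_comm.mp hU
    obtain ⟨θ, h00, h01, h | h⟩ := orthogonal_two_cases _ hM
    · refine ⟨θ, Or.inl ?_⟩
      rw [kron_mulVec_v3, h00, h01, h.1, h.2]
      ext i
      fin_cases i <;> simp [v3, v4, mul_comm]
    · refine ⟨θ, Or.inr ?_⟩
      rw [kron_mulVec_v3, h00, h01, h.1, h.2]
      ext i
      fin_cases i <;> simp [v1, v2, mul_comm]
  · rintro ⟨θ, rfl | rfl⟩
    · refine ⟨!![Real.cos θ, Real.sin θ; -Real.sin θ, Real.cos θ], 1, ?_, by simp, ?_⟩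
      · ext i j
        fin_cases i <;> fin_cases j <;>
          simp [Matrix.mul_apply, Fin.sum_univ_two] <;>
          linarith [Real.sin_sq_add_cos_sq θ]
      · rw [kron_mulVec_v3]
        ext i
        fin_cases i <;> simp [v3, v4, mul_comm]
    · refine ⟨!![Real.cos θ, Real.sin θ; Real.sin θ, -Real.cos θ], 1, ?_, by simp, ?_⟩
      · ext i j
        fin_cases i <;> fin_cases j <;>
          simp [Matrix.mul_apply, Fin.sum_univ_two] <;>
          linarith [Real.sin_sq_add_cos_sq θ]
      · rw [kron_mulVec_v3]
        ext i
        fin_cases i <;> simp [v1, v2, mul_comm]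
end

section
/- Let w = (w₁,w₂,w₃,w₄) be a unit vector in ℝ⁴. There exist 2×2 real orthogonal matrices U and V with (U ⊗ V) e₀₀ = w, where e₀₀ = (1,0,0,0), if and only if w₁w₄ = w₂w₃. (The orbit of the state |00⟩ under real local gates consists exactly of the unentangled unit states, those whose amplitude matrix has determinant zero.) -/
/-!
Arrange `w` as the amplitude matrix with rows `(w 0, w 1)` and `(w 2, w 3)`. The first column of
`kron U V` is the outer product of the first columns of `U` and `V`, so it has determinant zero.
Conversely, if the determinant vanishes, both rows are multiples of one unit vector `(c, d)`
(`exists_unit_parallel`). Pairing the rows with `(c, d)` gives a vector `(a, b)` whose outer product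
with `(c, d)` is `w`; it has norm one because `w` does. Each unit vector is the first column of a
planar rotation.
-/

open Matrix Real

/-- Parallel plane vectors `(p, q)`, `(r, s)`, normalized so as not to be both zero, are multiples of
a common unit vector `(c, d)`. -/
theorem exists_unit_parallel (p q r s : ℝ) (h : p ^ 2 + q ^ 2 + r ^ 2 + s ^ 2 = 1)
    (hdet : p * s = q * r) :
    ∃ c d : ℝ, c ^ 2 + d ^ 2 = 1 ∧ p * d = q * c ∧ r * d = s * c := by
  by_cases h0 : p ^ 2 + q ^ 2 = 0
  · have hp : p = 0 := by nlinarith [sq_nonneg p, sq_nonneg q]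
    have hq : q = 0 := by nlinarith [sq_nonneg p, sq_nonneg q]
    subst hp hq
    exact ⟨r, s, by linarith, by ring, by ring⟩
  · have hsq : √(p ^ 2 + q ^ 2) ^ 2 = p ^ 2 + q ^ 2 := Real.sq_sqrt (by positivity)
    have hne : √(p ^ 2 + q ^ 2) ≠ 0 := fun hz => h0 (by rw [← hsq, hz]; ring)
    refine ⟨p / √(p ^ 2 + q ^ 2), q / √(p ^ 2 + q ^ 2), ?_, by ring, ?_⟩
    · rw [div_pow, div_pow, hsq, ← add_div, div_self h0]
    · rw [← mul_div_assoc, ← mul_div_assoc]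
      congr 1
      linarith

theorem rotation_orthogonal (a b : ℝ) (h : a ^ 2 + b ^ 2 = 1) :
    (!![a, -b; b, a] : Matrix (Fin 2) (Fin 2) ℝ)ᵀ * !![a, -b; b, a] = 1 := by
  ext i j
  fin_cases i <;> fin_cases j <;> simp [Matrix.mul_apply, Fin.sum_univ_two] <;> linarith

/-- The image of `e₀₀` is the first column of `kron U V`, the outer product of the first columns. -/
theorem kron_mulVec_e00 (U V : Matrix (Fin 2) (Fin 2) ℝ) :
    (kron U V).mulVec ![1, 0, 0, 0] =
      ![U 0 0 * V 0 0, U 0 0 * V 1 0, U 1 0 * V 0 0, U 1 0 * V 1 0] := by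
  ext i
  fin_cases i <;> simp [kron, Matrix.mulVec, dotProduct, Fin.sum_univ_four]

theorem stmt_4 (w : Fin 4 → ℝ)
    (hw : w 0 ^ 2 + w 1 ^ 2 + w 2 ^ 2 + w 3 ^ 2 = 1) :
    (∃ U V : Matrix (Fin 2) (Fin 2) ℝ, Uᵀ * U = 1 ∧ Vᵀ * V = 1 ∧
        (kron U V).mulVec ![1, 0, 0, 0] = w) ↔
      w 0 * w 3 = w 1 * w 2 := by
  constructor
  · rintro ⟨U, V, -, -, rfl⟩
    rw [kron_mulVec_e00]
    simp
    ring
  · intro hdet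
    obtain ⟨c, d, hcd, h1, h2⟩ := exists_unit_parallel _ _ _ _ hw hdet
    have e0 : (w 0 * c + w 1 * d) * c = w 0 := by linear_combination w 0 * hcd - d * h1
    have e1 : (w 0 * c + w 1 * d) * d = w 1 := by linear_combination w 1 * hcd + c * h1
    have e2 : (w 2 * c + w 3 * d) * c = w 2 := by linear_combination w 2 * hcd - d * h2
    have e3 : (w 2 * c + w 3 * d) * d = w 3 := by linear_combination w 3 * hcd + c * h2
    generalize w 0 * c + w 1 * d = a at *
    generalize w 2 * c + w 3 * d = b at *
    have hab : a ^ 2 + b ^ 2 = 1 := by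
      rw [← e0, ← e1, ← e2, ← e3] at hw
      linear_combination hw - (a ^ 2 + b ^ 2) * hcd
    refine ⟨!![a, -b; b, a], !![c, -d; d, c], rotation_orthogonal a b hab,
      rotation_orthogonal c d hcd, ?_⟩
    rw [kron_mulVec_e00]
    ext i
    fin_cases i
    · simpa using e0
    · simpa using e1
    · simpa using e2
    · simpa using e3
end

section
/- A unit vector w = (w₁,w₂,w₃,w₄) ∈ ℝ⁴ is a product (unentangled) state, i.e. there exist vectors a = (a₁,a₂) and b = (b₁,b₂) in ℝ² with w₁ = a₁b₁, w₂ = a₁b₂, w₃ = a₂b₁, w₄ = a₂b₂, if and only if w₁w₄ = w₂w₃. Equivalently, in Bell coordinates, the product states are exactly those with x₁² + x₂² = 1/2 = x₃² + x₄², i.e. the points of the torus Σ_{π/4}. -/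
open Real

/-!
The state is a product state iff its amplitude matrix is an outer product, which for a 2 × 2 matrix
means zero determinant (`exists_outer_product_iff`). In Bell coordinates, a unit vector satisfies
`x₁² + x₂² = 1/2 - det W` and `x₃² + x₄² = 1/2 + det W`, so both equal `1/2` exactly when
`det W = 0`.
-/

/-- A real 2 × 2 matrix with zero determinant is an outer product: if its first row is nonzero, the
second row is a multiple of it; otherwise the second row alone gives the factorization. -/
lemma exists_outer_product_iff (p q r s : ℝ) :
    (∃ a₁ a₂ b₁ b₂ : ℝ, p = a₁ * b₁ ∧ q = a₁ * b₂ ∧ r = a₂ * b₁ ∧ s = a₂ * b₂) ↔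
      p * s = q * r := by
  constructor
  · rintro ⟨a₁, a₂, b₁, b₂, rfl, rfl, rfl, rfl⟩
    ring
  · intro h
    by_cases hp : p = 0
    · by_cases hq : q = 0
      · exact ⟨0, 1, r, s, by simp [hp], by simp [hq], by simp, by simp⟩
      · refine ⟨1, s / q, p, q, by simp, by simp, ?_, ?_⟩
        · field_simp
          linarith
        · field_simp
    · refine ⟨1, r / p, p, q, by simp, by simp, ?_, ?_⟩
      · field_simp
      · field_simp
        linarith

theorem stmt_5 (w : Fin 4 → ℝ)
    (hw : w 0 ^ 2 + w 1 ^ 2 + w 2 ^ 2 + w 3 ^ 2 = 1) :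
    ((∃ a₁ a₂ b₁ b₂ : ℝ,
        w 0 = a₁ * b₁ ∧ w 1 = a₁ * b₂ ∧ w 2 = a₂ * b₁ ∧ w 3 = a₂ * b₂) ↔
      w 0 * w 3 = w 1 * w 2) ∧
    ((∃ a₁ a₂ b₁ b₂ : ℝ,
        w 0 = a₁ * b₁ ∧ w 1 = a₁ * b₂ ∧ w 2 = a₂ * b₁ ∧ w 3 = a₂ * b₂) ↔
      ((w 0 - w 3) / Real.sqrt 2) ^ 2 + ((w 1 + w 2) / Real.sqrt 2) ^ 2 = 1 / 2 ∧
      ((w 0 + w 3) / Real.sqrt 2) ^ 2 + ((w 1 - w 2) / Real.sqrt 2) ^ 2 = 1 / 2) := by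
  have key := exists_outer_product_iff (w 0) (w 1) (w 2) (w 3)
  refine ⟨key, key.trans ?_⟩
  simp only [div_pow, Real.sq_sqrt (zero_le_two : (0 : ℝ) ≤ 2)]
  constructor
  · intro h
    constructor <;> linarith
  · rintro ⟨h, -⟩
    linarith
end

section
/- Let w = (w₁,w₂,w₃,w₄) be a unit vector in ℝ⁴. Then |w₁w₄ − w₂w₃| = 1/2 if and only if there exists θ ∈ ℝ such that w = cos θ · v₃ + sin θ · v₄ or w = cos θ · v₁ + sin θ · v₂. (The maximally entangled two-qubit states with real amplitudes form exactly the union of the two disjoint circles E(v₃,v₄) and E(v₁,v₂) in the three-sphere.) -/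
/-!
Write `w = (w₁, w₂, w₃, w₄)`, so `wᵢ` is `w (i - 1)` below. For a unit vector,
`1 - 2 (w₁w₄ - w₂w₃) = (w₁ - w₄)² + (w₂ + w₃)²` and
`1 + 2 (w₁w₄ - w₂w₃) = (w₁ + w₄)² + (w₂ - w₃)²`. Hence the determinant is `1/2` exactly when
`w₄ = w₁` and `w₃ = -w₂`, i.e. `w` lies in the span of `v3`, `v4`, and it is `-1/2` exactly when
`w₄ = -w₁` and `w₃ = w₂`, i.e. `w` lies in the span of `v1`, `v2`. In both cases
`(√2 w₁, √2 w₂)` is a point of the unit circle, which supplies the angle `θ`.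
-/

open Matrix Real

lemma exists_angle_of_sq_add_sq {x y : ℝ} (h : x ^ 2 + y ^ 2 = 1) :
    ∃ θ : ℝ, Real.cos θ = x ∧ Real.sin θ = y := by
  have hn : ‖(⟨x, y⟩ : ℂ)‖ = 1 := by
    rw [Complex.norm_def, Complex.normSq_mk, ← sq, ← sq, h, Real.sqrt_one]
  refine ⟨Complex.arg ⟨x, y⟩, ?_, ?_⟩
  · have := Complex.norm_mul_cos_arg ⟨x, y⟩
    rwa [hn, one_mul] at this
  · have := Complex.norm_mul_sin_arg ⟨x, y⟩
    rwa [hn, one_mul] at this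

theorem stmt_7 (w : Fin 4 → ℝ)
    (hw : w 0 ^ 2 + w 1 ^ 2 + w 2 ^ 2 + w 3 ^ 2 = 1) :
    |w 0 * w 3 - w 1 * w 2| = 1 / 2 ↔
      ∃ θ : ℝ, w = Real.cos θ • v3 + Real.sin θ • v4 ∨
               w = Real.cos θ • v1 + Real.sin θ • v2 := by
  have h2 : Real.sqrt 2 ^ 2 = 2 := Real.sq_sqrt (by norm_num)
  have h0 : Real.sqrt 2 ≠ 0 := by positivity
  have hinv : (Real.sqrt 2)⁻¹ ^ 2 = 1 / 2 := by rw [inv_pow, h2]; norm_num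
  constructor
  · intro h
    rcases (abs_eq (by norm_num)).1 h with h | h
    · have e1 : w 3 = w 0 := by nlinarith [sq_nonneg (w 0 - w 3), sq_nonneg (w 1 + w 2)]
      have e2 : w 2 = -w 1 := by nlinarith [sq_nonneg (w 0 - w 3), sq_nonneg (w 1 + w 2)]
      obtain ⟨θ, hc, hs⟩ := exists_angle_of_sq_add_sq
        (x := Real.sqrt 2 * w 0) (y := Real.sqrt 2 * w 1) (by
          rw [mul_pow, mul_pow, h2]
          rw [e1, e2] at hw
          linarith)
      refine ⟨θ, Or.inl ?_⟩
      ext i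
      fin_cases i <;> simp [v3, v4, hc, hs, e1, e2] <;> field_simp
    · have e1 : w 3 = -w 0 := by nlinarith [sq_nonneg (w 0 + w 3), sq_nonneg (w 1 - w 2)]
      have e2 : w 2 = w 1 := by nlinarith [sq_nonneg (w 0 + w 3), sq_nonneg (w 1 - w 2)]
      obtain ⟨θ, hc, hs⟩ := exists_angle_of_sq_add_sq
        (x := Real.sqrt 2 * w 0) (y := Real.sqrt 2 * w 1) (by
          rw [mul_pow, mul_pow, h2]
          rw [e1, e2] at hw
          linarith)
      refine ⟨θ, Or.inr ?_⟩
      ext i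
      fin_cases i <;> simp [v1, v2, hc, hs, e1, e2] <;> field_simp
  · rintro ⟨θ, h | h⟩
    · rw [abs_eq (by norm_num)]
      left
      simp only [h, v3, v4]
      simp
      linear_combination (Real.cos θ ^ 2 + Real.sin θ ^ 2) * hinv +
        1 / 2 * Real.sin_sq_add_cos_sq θ
    · rw [abs_eq (by norm_num)]
      right
      simp only [h, v1, v2]
      simp
      linear_combination -(Real.cos θ ^ 2 + Real.sin θ ^ 2) * hinv -
        1 / 2 * Real.sin_sq_add_cos_sq θ
end

section
/- For all real numbers d₁ and d with 0 ≤ d₁ ≤ d ≤ π/2, there exists a unit vector x = (x₁,x₂,x₃,x₄) ∈ ℝ⁴ satisfying simultaneously x₂² + x₃² = sin² d, x₁² + x₄² = cos² d, x₁² + x₂² = sin² d₁ and x₃² + x₄² = cos² d₁; indeed x = (0, sin d₁, √(sin² d − sin² d₁), cos d) is such a solution. (The torus obtained by applying the CZ gate to the torus Σ_d intersects every torus Σ_{d₁}, which is the key geometric fact behind the one-CZ connectivity theorem.) -/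
open Real

theorem stmt_14 (d₁ d : ℝ) (h0 : 0 ≤ d₁) (h1 : d₁ ≤ d) (h2 : d ≤ Real.pi / 2)
    (x : Fin 4 → ℝ)
    (hx : x = ![0, Real.sin d₁,
      Real.sqrt (Real.sin d ^ 2 - Real.sin d₁ ^ 2), Real.cos d]) :
    x 0 ^ 2 + x 1 ^ 2 + x 2 ^ 2 + x 3 ^ 2 = 1 ∧
    x 1 ^ 2 + x 2 ^ 2 = Real.sin d ^ 2 ∧
    x 0 ^ 2 + x 3 ^ 2 = Real.cos d ^ 2 ∧
    x 0 ^ 2 + x 1 ^ 2 = Real.sin d₁ ^ 2 ∧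
    x 2 ^ 2 + x 3 ^ 2 = Real.cos d₁ ^ 2 := by
  -- `sin` is nonnegative and increasing on `[0, π/2]`, so the radicand is nonnegative.
  have hs0 : 0 ≤ Real.sin d₁ := Real.sin_nonneg_of_nonneg_of_le_pi h0 (by linarith [Real.pi_pos])
  have hs : Real.sin d₁ ≤ Real.sin d :=
    Real.sin_le_sin_of_le_of_le_pi_div_two (by linarith [Real.pi_pos]) h2 h1
  have hsq : Real.sqrt (Real.sin d ^ 2 - Real.sin d₁ ^ 2) ^ 2 = Real.sin d ^ 2 - Real.sin d₁ ^ 2 :=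
    Real.sq_sqrt (sub_nonneg.mpr (pow_le_pow_left₀ hs0 hs 2))
  have e0 : x 0 = 0 := by rw [hx]; rfl
  have e1 : x 1 = Real.sin d₁ := by rw [hx]; rfl
  have e2 : x 2 = Real.sqrt (Real.sin d ^ 2 - Real.sin d₁ ^ 2) := by rw [hx]; rfl
  have e3 : x 3 = Real.cos d := by rw [hx]; rfl
  have p := Real.sin_sq_add_cos_sq d
  have p₁ := Real.sin_sq_add_cos_sq d₁
  rw [e0, e1, e2, e3, hsq]
  refine ⟨?_, ?_, ?_, ?_, ?_⟩ <;> linarith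
end

section
/- For every unit vector w = (w₁,w₂,w₃,w₄) ∈ ℝ⁴ there exist angles θ₀, θ₁, θ₂ ∈ ℝ such that (I₂ ⊗ R_y(θ₂)) · CZ · (R_y(θ₁) ⊗ R_y(θ₀)) e₀₀ = w, where e₀₀ = (1,0,0,0) and I₂ is the 2×2 identity matrix. (Every two-qubit state with real amplitudes can be prepared from |00⟩ by a circuit with three R_y gates and a single controlled-Z gate.) -/
/-!
With `θ₀ = 2a`, `θ₁ = 2b`, `θ₂ = 2c`, the circuit prepares
`(cos b cos (c + a), cos b sin (c + a), sin b cos (c - a), sin b sin (c - a))`, because the `CZ` gate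
reflects the second qubit's vector `(cos a, sin a)` to angle `-a` on the branch where the first
qubit is `|1⟩`. So it suffices to write `(w₁, w₂)` and `(w₃, w₄)` in polar coordinates
`(r, p)` and `(s, q)`, note that `(r, s)` lies on the unit circle and hence is `(cos b, sin b)`,
and solve `c + a = p`, `c - a = q`.
-/

open Matrix Real

/-- The controlled-Z gate `CZ = diag(1,1,1,-1)`. -/
def CZ : Matrix (Fin 4) (Fin 4) ℝ :=
  !![1, 0, 0, 0; 0, 1, 0, 0; 0, 0, 1, 0; 0, 0, 0, -1]

lemma exists_polar (x y : ℝ) : ∃ r p : ℝ, x = r * cos p ∧ y = r * sin p :=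
  ⟨‖(⟨x, y⟩ : ℂ)‖, Complex.arg ⟨x, y⟩,
    (Complex.norm_mul_cos_arg ⟨x, y⟩).symm, (Complex.norm_mul_sin_arg ⟨x, y⟩).symm⟩

lemma exists_angle_s16 {r s : ℝ} (h : r ^ 2 + s ^ 2 = 1) : ∃ b : ℝ, r = cos b ∧ s = sin b := by
  have hn : ‖(⟨r, s⟩ : ℂ)‖ = 1 := by
    have h2 : ‖(⟨r, s⟩ : ℂ)‖ ^ 2 = 1 := by
      rw [Complex.sq_norm, Complex.normSq_mk]
      linarith
    exact (pow_eq_one_iff_of_nonneg (norm_nonneg _) two_ne_zero).mp h2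
  have hc := Complex.norm_mul_cos_arg ⟨r, s⟩
  have hs := Complex.norm_mul_sin_arg ⟨r, s⟩
  rw [hn, one_mul] at hc hs
  exact ⟨_, hc.symm, hs.symm⟩

lemma circuit_output (a b c : ℝ) :
    (kron 1 (Ry (2 * c))).mulVec
        (CZ.mulVec ((kron (Ry (2 * b)) (Ry (2 * a))).mulVec ![1, 0, 0, 0])) =
      ![cos b * cos (c + a), cos b * sin (c + a), sin b * cos (c - a), sin b * sin (c - a)] := by
  have h2 : ∀ x : ℝ, 2 * x / 2 = x := fun x => by ring
  funext i
  fin_cases i <;>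
    simp [kron, Ry, CZ, Matrix.mulVec, dotProduct, Fin.sum_univ_four, h2, Matrix.one_apply,
      cos_add, sin_add, cos_sub, sin_sub] <;> ring

theorem stmt_16 (w : Fin 4 → ℝ)
    (hw : w 0 ^ 2 + w 1 ^ 2 + w 2 ^ 2 + w 3 ^ 2 = 1) :
    ∃ θ₀ θ₁ θ₂ : ℝ,
      (kron 1 (Ry θ₂)).mulVec
        (CZ.mulVec ((kron (Ry θ₁) (Ry θ₀)).mulVec ![1, 0, 0, 0])) = w := by
  obtain ⟨r, p, h0, h1⟩ := exists_polar (w 0) (w 1)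
  obtain ⟨s, q, h2, h3⟩ := exists_polar (w 2) (w 3)
  have hrs : r ^ 2 + s ^ 2 = 1 := by
    rw [h0, h1, h2, h3] at hw
    linear_combination hw - r ^ 2 * sin_sq_add_cos_sq p - s ^ 2 * sin_sq_add_cos_sq q
  obtain ⟨b, rfl, rfl⟩ := exists_angle_s16 hrs
  refine ⟨2 * ((p - q) / 2), 2 * b, 2 * ((p + q) / 2), ?_⟩
  have hp : (p + q) / 2 + (p - q) / 2 = p := by ring
  have hq : (p + q) / 2 - (p - q) / 2 = q := by ring
  rw [circuit_output, hp, hq, ← h0, ← h1, ← h2, ← h3]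
  funext i
  fin_cases i <;> rfl
end

section
/- Let w = (w₁,w₂,w₃,w₄) be a unit vector in ℝ⁴, let J = [[0,−1],[1,0]], and let I₂ be the 2×2 identity. Then ‖(J ⊗ I₂)w‖² · ‖(I₂ ⊗ J)w‖² − ⟨(J ⊗ I₂)w, (I₂ ⊗ J)w⟩² = 1 − 4(w₁w₄ − w₂w₃)². In particular, writing w₁w₄ − w₂w₃ = cos(2d)/2, this Gram determinant equals sin²(2d), so for sin(2d) ≠ 0 the tangent vectors to the orbit of w under R_y(2s) ⊗ R_y(2t) are linearly independent and the orbit map is an immersion. -/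
/-!
Both `J ⊗ I₂` and `I₂ ⊗ J` act on `w` by a signed permutation of its coordinates, so the two
tangent vectors `u = (-w₃, -w₄, w₁, w₂)` and `v = (-w₂, w₁, -w₄, w₃)` are again unit vectors, and
their inner product is `-2 (w₁ w₄ - w₂ w₃)`. The Gram determinant is therefore
`1 - 4 (w₁ w₄ - w₂ w₃)²`, which is `1 - cos² (2d) = sin² (2d)` under the substitution.
-/

open Matrix Real

/-- The infinitesimal generator `J = [[0,-1],[1,0]]` of the rotation family `R_y`. -/
def J : Matrix (Fin 2) (Fin 2) ℝ := !![0, -1; 1, 0]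

theorem stmt_17 (w : Fin 4 → ℝ)
    (hw : w 0 ^ 2 + w 1 ^ 2 + w 2 ^ 2 + w 3 ^ 2 = 1)
    (u v : Fin 4 → ℝ)
    (hu : u = (kron J 1).mulVec w) (hv : v = (kron 1 J).mulVec w) :
    ((u 0 ^ 2 + u 1 ^ 2 + u 2 ^ 2 + u 3 ^ 2) *
        (v 0 ^ 2 + v 1 ^ 2 + v 2 ^ 2 + v 3 ^ 2)
      - (u 0 * v 0 + u 1 * v 1 + u 2 * v 2 + u 3 * v 3) ^ 2
      = 1 - 4 * (w 0 * w 3 - w 1 * w 2) ^ 2) ∧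
    ∀ d : ℝ, w 0 * w 3 - w 1 * w 2 = Real.cos (2 * d) / 2 →
      (u 0 ^ 2 + u 1 ^ 2 + u 2 ^ 2 + u 3 ^ 2) *
          (v 0 ^ 2 + v 1 ^ 2 + v 2 ^ 2 + v 3 ^ 2)
        - (u 0 * v 0 + u 1 * v 1 + u 2 * v 2 + u 3 * v 3) ^ 2
        = Real.sin (2 * d) ^ 2 := by
  have hu' : u = ![-w 2, -w 3, w 0, w 1] := by
    rw [hu]
    ext i
    fin_cases i <;> simp [kron, _root_.J, Matrix.mulVec, dotProduct, Fin.sum_univ_four,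
      Matrix.one_apply]
  have hv' : v = ![-w 1, w 0, -w 3, w 2] := by
    rw [hv]
    ext i
    fin_cases i <;> simp [kron, _root_.J, Matrix.mulVec, dotProduct, Fin.sum_univ_four,
      Matrix.one_apply]
  have hu_norm : u 0 ^ 2 + u 1 ^ 2 + u 2 ^ 2 + u 3 ^ 2 = 1 := by
    simp [hu']
    linarith
  have hv_norm : v 0 ^ 2 + v 1 ^ 2 + v 2 ^ 2 + v 3 ^ 2 = 1 := by
    simp [hv']
    linarith
  have h_inner : u 0 * v 0 + u 1 * v 1 + u 2 * v 2 + u 3 * v 3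
      = -2 * (w 0 * w 3 - w 1 * w 2) := by
    simp [hu', hv']
    ring
  rw [hu_norm, hv_norm, h_inner]
  refine ⟨by ring, fun d hd => ?_⟩
  rw [hd, Real.sin_sq]
  ring
end
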